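/- For every ε ∈ (0,π) there exist constants C > 0 and t₀ > 0 such that for all t ∈ (0,t₀) and all δ ∈ (0, π−ε], | (4πt)^{11/2}·(sin δ/δ)⁵·e^{δ²/(4t)}·q_t(cos δ) − 1 − (25 − 20(sin δ − δ·cos δ)/(δ²·sin δ))·t | ≤ C·t². That is, q_t(cos δ) = (1/(4πt)^{11/2})·(δ/sin δ)⁵·e^{−δ²/(4t)}·(1 + (25 − 20(sin δ − δ cos δ)/(δ² sin δ))·t + t²·R₁(t,δ)) with R₁ uniformly bounded as t → 0 on δ ∈ (0, π−ε]. -/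

import Mathlib

open Real MeasureTheory Filter Topology

/-- Jacobi polynomial `P_k^{3,b}` (with `b = m+3` octonionic, `b = m+1` quaternionic),
given by the polynomial extension of the Rodrigues formula. -/
noncomputable def jacP (k b : ℕ) : Polynomial ℝ :=
  Polynomial.C ((-1 : ℝ) ^ k / (2 ^ k * (Nat.factorial k : ℝ))) *
    (Polynomial.derivative^[k]
        ((1 - Polynomial.X) ^ (k + 3) * (1 + Polynomial.X) ^ (b + k)) /
      ((1 - Polynomial.X) ^ 3 * (1 + Polynomial.X) ^ b))

/-- Normalized eigenfunction `h_m` of the radial Laplacian on `S^7`. -/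
noncomputable def hOct (m : ℕ) (η : ℝ) : ℝ :=
  (Real.Gamma (7 / 2) / (Real.sqrt π * Real.Gamma 3)) *
    ∫ φ in (0 : ℝ)..π,
      (((Real.cos η : ℂ) + Complex.I * ((Real.sin η * Real.cos φ : ℝ) : ℂ)) ^ m).re *
        (Real.sin φ) ^ 5

/-- Coefficient `α_{k,m}`. -/
noncomputable def alphOct (k m : ℕ) : ℝ :=
  (96 / π ^ 8) * (m + 3) * (2 * k + m + 7) *
    (Nat.choose (k + m + 6) (k + m + 3)) * (Nat.choose (m + 5) m)

/-- Subelliptic heat kernel of the octonionic Hopf fibration, in cylindric coordinates. -/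
noncomputable def pOct (t r η : ℝ) : ℝ :=
  ∑' m : ℕ, ∑' k : ℕ,
    alphOct k m * hOct m η * Real.exp (-(4 * ((k * (k + m + 7) + 2 * m : ℕ) : ℝ)) * t) *
      (Real.cos r) ^ m * (jacP k (m + 3)).eval (Real.cos (2 * r))

/-- Coefficient `β_{k,m}` of the quaternionic heat kernel. -/
noncomputable def betQ (k m : ℕ) : ℝ :=
  (Real.Gamma 4 / (2 * π ^ 6)) * (2 * k + m + 5) * (m + 1) *
    (Nat.choose (k + m + 4) (k + m + 1))

/-- Subelliptic heat kernel of the quaternionic Hopf fibration on `S^11`. -/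
noncomputable def pQuat (t r η : ℝ) : ℝ :=
  ∑' m : ℕ, ∑' k : ℕ,
    betQ k m * Real.exp (-(4 * ((k * (k + m + 5) + 2 * m : ℕ) : ℝ)) * t) *
      (Real.sin ((m + 1) * η) / Real.sin η) *
      (Real.cos r) ^ m * (jacP k (m + 1)).eval (Real.cos (2 * r))

/-- Gegenbauer polynomial `C_m^5` (polynomial extension to all real `x`). -/
noncomputable def geg5 (m : ℕ) (x : ℝ) : ℝ :=
  ∑ j ∈ Finset.range (m / 2 + 1),
    (-1 : ℝ) ^ j * (Nat.factorial (m - j + 4)) /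
      ((Nat.factorial 4) * (Nat.factorial j) * (Nat.factorial (m - 2 * j))) * (2 * x) ^ (m - 2 * j)

/-- Radial heat kernel of the round sphere `S^11`, as a function of `cos δ`. -/
noncomputable def qS11 (t x : ℝ) : ℝ :=
  (Real.Gamma 5 / (2 * π ^ 6)) *
    ∑' m : ℕ, (m + 5) * Real.exp (-((m * (m + 10) : ℕ) : ℝ) * t) * geg5 m x

/-- The kernel `g_t(η,y)` appearing in the integral representation. -/
noncomputable def gInt (t η y : ℝ) : ℝ :=
  (Real.sin η)⁻¹ ^ 3 *
    (Real.cos (η * y / (2 * t)) * (2 * y) * (η - 3 * t * Real.cot η) +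
      Real.sin (η * y / (2 * t)) *
        (8 * t ^ 2 * Real.cot η ^ 2 + 4 * t ^ 2 * ((Real.sin η)⁻¹) ^ 2 -
          6 * t * η * Real.cot η + 2 * t + η ^ 2 - y ^ 2))

/-- Theta-type function `V(t,δ)`. -/
noncomputable def Vtheta (t δ : ℝ) : ℝ :=
  (1 / Real.sqrt (4 * π * t)) * ∑' k : ℤ, Real.exp (-(δ - 2 * k * π) ^ 2 / (4 * t))

/-- The operator `f ↦ -(1/(2π sin δ)) f'`. -/
noncomputable def Dop (f : ℝ → ℝ) : ℝ → ℝ :=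
  fun δ => -(1 / (2 * π * Real.sin δ)) * deriv f δ


/-!
The polynomial `C_m^N` is a multiple of the `N`-th derivative of the Chebyshev polynomial `T_{m+N}`,
so up to the factor `exp (N² t) / (2π)^(N+1)` the heat kernel of `S^(2N+1)` is the `N`-th
derivative, with respect to `x = cos ζ`, of the theta series `∑ₙ exp (-n² t) Tₙ(x)`. In the variable
`z = ζ²`, Jacobi's functional equation gives this series the form `√(π/t) exp (-z/4t) A₀(t, z)`,
where `A₀ = 1 + O(t²)` locally uniformly on the image of the strip `|re ζ| < π`. There `z ↦ cos √z`
is holomorphic with nowhere vanishing derivative, even at `z = 0`, so differentiating `N` times with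
respect to `cos √z` keeps the form of the expression and acts on the amplitude by an explicit
recursion. The amplitudes being holomorphic, Cauchy's estimate lets their error terms be
differentiated, and the recursion determines the coefficient of `t`.
-/

section HolomorphicFamilies

/-- A family `E t`, `t ∈ (0, 1]`, of holomorphic functions on `U` which is `O(t ^ p)` as `t → 0`,
locally uniformly on `U`. -/
structure HolBigO (p : ℕ) (U : Set ℂ) (E : ℝ → ℂ → ℂ) : Prop where
  differentiableOn : ∀ t ∈ Set.Ioc (0 : ℝ) 1, DifferentiableOn ℂ (E t) U
  exists_bound : ∀ K ⊆ U, IsCompact K →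
    ∃ C : ℝ, ∀ t ∈ Set.Ioc (0 : ℝ) 1, ∀ z ∈ K, ‖E t z‖ ≤ C * t ^ p

namespace HolBigO

variable {p q : ℕ} {U : Set ℂ} {E F : ℝ → ℂ → ℂ}

theorem const {f : ℂ → ℂ} (hf : DifferentiableOn ℂ f U) : HolBigO 0 U fun _ => f where
  differentiableOn _ _ := hf
  exists_bound K hKU hK := by
    obtain ⟨C, hC⟩ := hK.exists_bound_of_continuousOn (hf.continuousOn.mono hKU)
    exact ⟨C, fun t _ z hz => by simpa using hC z hz⟩

theorem time (U : Set ℂ) : HolBigO 1 U fun t _ => (t : ℂ) where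
  differentiableOn _ _ := differentiableOn_const _
  exists_bound _ _ _ := ⟨1, fun t ht _ _ => by simp [abs_of_pos ht.1]⟩

theorem mono (hE : HolBigO q U E) (hpq : p ≤ q) : HolBigO p U E where
  differentiableOn := hE.differentiableOn
  exists_bound K hKU hK := by
    obtain ⟨C, hC⟩ := hE.exists_bound K hKU hK
    refine ⟨|C|, fun t ht z hz => (hC t ht z hz).trans ?_⟩
    exact mul_le_mul (le_abs_self C) (pow_le_pow_of_le_one ht.1.le ht.2 hpq)
      (pow_nonneg ht.1.le q) (abs_nonneg C)

theorem add (hE : HolBigO p U E) (hF : HolBigO p U F) :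
    HolBigO p U fun t z => E t z + F t z where
  differentiableOn t ht := (hE.differentiableOn t ht).add (hF.differentiableOn t ht)
  exists_bound K hKU hK := by
    obtain ⟨C, hC⟩ := hE.exists_bound K hKU hK
    obtain ⟨D, hD⟩ := hF.exists_bound K hKU hK
    refine ⟨C + D, fun t ht z hz => ?_⟩
    rw [add_mul]
    exact norm_add_le_of_le (hC t ht z hz) (hD t ht z hz)

theorem mul (hE : HolBigO p U E) (hF : HolBigO q U F) :
    HolBigO (p + q) U fun t z => E t z * F t z where
  differentiableOn t ht := (hE.differentiableOn t ht).mul (hF.differentiableOn t ht)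
  exists_bound K hKU hK := by
    obtain ⟨C, hC⟩ := hE.exists_bound K hKU hK
    obtain ⟨D, hD⟩ := hF.exists_bound K hKU hK
    refine ⟨C * D, fun t ht z hz => ?_⟩
    calc ‖E t z * F t z‖ = ‖E t z‖ * ‖F t z‖ := norm_mul _ _
      _ ≤ C * t ^ p * (D * t ^ q) :=
        mul_le_mul (hC t ht z hz) (hD t ht z hz) (norm_nonneg _)
          ((norm_nonneg _).trans (hC t ht z hz))
      _ = C * D * t ^ (p + q) := by ring

theorem const_mul {f : ℂ → ℂ} (hf : DifferentiableOn ℂ f U) (hE : HolBigO p U E) :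
    HolBigO p U fun t z => f z * E t z := by
  simpa only [zero_add] using (const hf).mul hE

theorem sub (hE : HolBigO p U E) (hF : HolBigO p U F) :
    HolBigO p U fun t z => E t z - F t z := by
  simpa only [neg_one_mul, ← sub_eq_add_neg] using
    hE.add (hF.const_mul (differentiableOn_const (-1)))

protected theorem deriv (hU : IsOpen U) (hE : HolBigO p U E) :
    HolBigO p U fun t => deriv (E t) where
  differentiableOn t ht := (hE.differentiableOn t ht).deriv hU
  exists_bound K hKU hK := by
    obtain ⟨r, hr, hrU⟩ := hK.exists_cthickening_subset_open hU hKU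
    obtain ⟨C, hC⟩ := hE.exists_bound _ hrU hK.cthickening
    refine ⟨C / r, fun t ht z hz => ?_⟩
    have hball : Metric.closedBall z r ⊆ Metric.cthickening r K :=
      Metric.closedBall_subset_cthickening hz r
    have hdiff : DiffContOnCl ℂ (E t) (Metric.ball z r) :=
      (((hE.differentiableOn t ht).mono hrU).mono hball).diffContOnCl_ball subset_rfl
    calc ‖_root_.deriv (E t) z‖ ≤ C * t ^ p / r :=
        Complex.norm_deriv_le_of_forall_mem_sphere_norm_le hr hdiff fun w hw =>
          hC t ht w (hball (Metric.sphere_subset_closedBall hw))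
      _ = C / r * t ^ p := by ring

theorem exp_sub_sum (U : Set ℂ) (a : ℂ) (p : ℕ) :
    HolBigO p U fun t _ =>
      Complex.exp (a * t) - ∑ k ∈ Finset.range p, (a * t) ^ k / k.factorial where
  differentiableOn _ _ := differentiableOn_const _
  exists_bound _ _ _ := by
    refine ⟨‖a‖ ^ p * Real.exp ‖a‖, fun t ht _ _ => ?_⟩
    have hnorm : ‖a * t‖ = ‖a‖ * t := by simp [abs_of_pos ht.1]
    calc _ ≤ ‖a * t‖ ^ p * Real.exp ‖a * t‖ := Complex.norm_exp_sub_sum_le_norm_mul_exp _ _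
      _ = ‖a‖ ^ p * Real.exp (‖a‖ * t) * t ^ p := by rw [hnorm]; ring
      _ ≤ ‖a‖ ^ p * Real.exp ‖a‖ * t ^ p := by
        have := ht.1.le
        gcongr
        exact mul_le_of_le_one_right (norm_nonneg a) ht.2

theorem exp_mul {A : ℝ → ℂ → ℂ} {l : ℂ → ℂ} (a : ℂ) (hl : DifferentiableOn ℂ l U)
    (hA : HolBigO 2 U fun t z => A t z - (1 + l z * t)) :
    HolBigO 2 U fun t z => Complex.exp (a * t) * A t z - (1 + (a + l z) * t) := by
  have h := (((exp_sub_sum U a 0).mul hA).add (exp_sub_sum U a 2)).add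
    (((time U).const_mul hl).mul (exp_sub_sum U a 1))
  convert h using 3 with t z
  simp only [Finset.sum_range_succ, Finset.range_zero, Finset.sum_empty, Nat.factorial_zero,
    Nat.factorial_one, Nat.cast_one]
  ring

end HolBigO

end HolomorphicFamilies

section Amplitudes

/-- Amplitudes of the derivatives of a function of WKB form: if
`F ∘ f = c * exp (-z / (4 * t)) * A`, then `(iteratedDeriv N F) ∘ f` has the same form, with
amplitude `amplitude f t A N` up to the factor `(-(4 * t * f')) ^ (-N)`. -/
noncomputable def amplitude (f : ℂ → ℂ) (t : ℝ) (A : ℂ → ℂ) : ℕ → ℂ → ℂ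
  | 0 => A
  | N + 1 => fun z => amplitude f t A N z +
      4 * t * (N * logDeriv (deriv f) z * amplitude f t A N z - deriv (amplitude f t A N) z)

variable {f : ℂ → ℂ} {U : Set ℂ}

theorem differentiableOn_logDeriv (hU : IsOpen U) (hf : DifferentiableOn ℂ f U)
    (hf' : ∀ z ∈ U, f z ≠ 0) : DifferentiableOn ℂ (logDeriv f) U :=
  (hf.deriv hU).div hf hf'

theorem differentiableOn_amplitude (hU : IsOpen U) (hf : DifferentiableOn ℂ f U)
    (hf' : ∀ z ∈ U, deriv f z ≠ 0) (t : ℝ) {A : ℂ → ℂ} (hA : DifferentiableOn ℂ A U) (N : ℕ) :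
    DifferentiableOn ℂ (amplitude f t A N) U := by
  induction N with
  | zero => exact hA
  | succ N ih =>
    have hl := differentiableOn_logDeriv hU (hf.deriv hU) hf'
    exact ih.add (((hl.const_mul _).mul ih |>.sub (ih.deriv hU)).const_mul _)

theorem iteratedDeriv_comp_eq_amplitude (hU : IsOpen U) (hf : DifferentiableOn ℂ f U)
    (hf' : ∀ z ∈ U, deriv f z ≠ 0) {t : ℝ} (ht : t ≠ 0) {A : ℂ → ℂ} (hA : DifferentiableOn ℂ A U)
    {F : ℂ → ℂ} (hF : Differentiable ℂ F) {c : ℂ}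
    (hFA : ∀ z ∈ U, F (f z) = c * Complex.exp (-z / (4 * t)) * A z) (N : ℕ) :
    ∀ z ∈ U, (-(4 * t * deriv f z)) ^ N * iteratedDeriv N F (f z) =
      c * Complex.exp (-z / (4 * t)) * amplitude f t A N z := by
  induction N with
  | zero => simpa [amplitude] using hFA
  | succ N ih =>
    intro z hz
    have htC : (t : ℂ) ≠ 0 := Complex.ofReal_ne_zero.mpr ht
    have hfz : HasDerivAt f (deriv f z) z := (hf.differentiableAt (hU.mem_nhds hz)).hasDerivAt
    have hf'z : HasDerivAt (deriv f) (deriv (deriv f) z) z :=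
      ((hf.deriv hU).differentiableAt (hU.mem_nhds hz)).hasDerivAt
    have hAz : HasDerivAt (amplitude f t A N) (deriv (amplitude f t A N) z) z :=
      ((differentiableOn_amplitude hU hf hf' t hA N).differentiableAt (hU.mem_nhds hz)).hasDerivAt
    have hFz : HasDerivAt (iteratedDeriv N F) (iteratedDeriv (N + 1) F (f z)) (f z) := by
      rw [iteratedDeriv_succ]
      exact ((hF.contDiff (n := ⊤)).differentiable_iteratedDeriv N (by simp) _).hasDerivAt
    have hexp : HasDerivAt (fun w : ℂ => Complex.exp (-w / (4 * t)))
        (Complex.exp (-z / (4 * t)) * (-1 / (4 * t))) z :=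
      (((hasDerivAt_id z).neg).div_const _).cexp
    have hlhs := ((hf'z.const_mul (4 * (t : ℂ))).neg.pow N).mul (hFz.comp z hfz)
    have hrhs := (hexp.const_mul c).mul hAz
    have heq := (hlhs.congr_of_eventuallyEq
      (Filter.eventuallyEq_of_mem (hU.mem_nhds hz) fun w hw => (ih w hw).symm)).unique hrhs
    have hpow : (N : ℂ) * (-(4 * t * deriv f z)) ^ (N - 1) * deriv f z * (-(4 * t)) =
        N * (-(4 * t * deriv f z)) ^ N := by
      cases N with
      | zero => simp
      | succ n => rw [Nat.add_sub_cancel]; ring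
    have hlog : logDeriv (deriv f) z * deriv f z = deriv (deriv f) z :=
      div_mul_cancel₀ _ (hf' z hz)
    have hinv : -1 / (4 * t : ℂ) * -(4 * t) = 1 := by field_simp
    simp only [← hlog, Pi.neg_apply, Pi.pow_apply, Function.comp_apply] at heq
    simp only [amplitude]
    linear_combination (-(4 * t : ℂ)) * heq
      + 4 * t * logDeriv (deriv f) z * iteratedDeriv N F (f z) * hpow
      + 4 * t * logDeriv (deriv f) z * N * ih z hz
      + c * Complex.exp (-z / (4 * t)) * amplitude f t A N z * hinv

/-- The recursion for `A_N = 1 + c_N * t * (log f')' + O(t ^ 2)` reads `c_{N+1} = c_N + 4 * N`. -/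
theorem holBigO_amplitude_sub (hU : IsOpen U) (hf : DifferentiableOn ℂ f U)
    (hf' : ∀ z ∈ U, deriv f z ≠ 0) {A : ℝ → ℂ → ℂ} (hA : HolBigO 2 U fun t z => A t z - 1) (N : ℕ) :
    HolBigO 2 U fun t z =>
      amplitude f t (A t) N z - (1 + 2 * N * (N - 1) * logDeriv (deriv f) z * t) := by
  have hl := differentiableOn_logDeriv hU (hf.deriv hU) hf'
  induction N with
  | zero => simpa [amplitude] using hA
  | succ N ih =>
    have hA1 : HolBigO 1 U fun t z => amplitude f t (A t) N z - 1 := by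
      have h := (ih.mono one_le_two).add
        ((HolBigO.time U).const_mul (hl.const_mul (2 * N * (N - 1) : ℂ)))
      convert h using 3 with t z
      ring
    have hstep := ((HolBigO.time U).const_mul (differentiableOn_const 4)).mul
      ((hA1.const_mul (hl.const_mul (N : ℂ))).sub (hA1.deriv hU))
    convert ih.add hstep using 3 with t z
    simp only [amplitude, deriv_sub_const]
    push_cast
    ring

end Amplitudes

section EntireSeries

variable {ι : Type*} {F : ι → ℂ → ℂ}

theorem tendstoLocallyUniformlyOn_sum_of_ball_bound (hbound : ∀ r : ℝ, ∃ u : ι → ℝ,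
      Summable u ∧ ∀ i, ∀ z ∈ Metric.ball (0 : ℂ) r, ‖F i z‖ ≤ u i) :
    TendstoLocallyUniformlyOn (fun (s : Finset ι) z => ∑ i ∈ s, F i z) (fun z => ∑' i, F i z)
      atTop Set.univ := by
  rw [tendstoLocallyUniformlyOn_iff_forall_isCompact isOpen_univ]
  intro K _ hK
  obtain ⟨r, hKr⟩ := hK.isBounded.subset_ball 0
  obtain ⟨u, hu, hFu⟩ := hbound r
  exact (tendstoUniformlyOn_tsum hu hFu).mono hKr

theorem differentiable_tsum_of_ball_bound (hF : ∀ i, Differentiable ℂ (F i))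
    (hbound : ∀ r : ℝ, ∃ u : ι → ℝ,
      Summable u ∧ ∀ i, ∀ z ∈ Metric.ball (0 : ℂ) r, ‖F i z‖ ≤ u i) :
    Differentiable ℂ fun z => ∑' i, F i z :=
  differentiableOn_univ.mp <|
    (tendstoLocallyUniformlyOn_sum_of_ball_bound hbound).differentiableOn
      (.of_forall fun _ => (Differentiable.fun_sum fun i _ => hF i).differentiableOn) isOpen_univ

theorem hasSum_iteratedDeriv_tsum_of_ball_bound (hF : ∀ i, Differentiable ℂ (F i))
    (hbound : ∀ r : ℝ, ∃ u : ι → ℝ,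
      Summable u ∧ ∀ i, ∀ z ∈ Metric.ball (0 : ℂ) r, ‖F i z‖ ≤ u i) (N : ℕ) (z : ℂ) :
    HasSum (fun i => iteratedDeriv N (F i) z) (iteratedDeriv N (fun w => ∑' i, F i w) z) := by
  have hdiff (s : Finset ι) (n : ℕ) :
      Differentiable ℂ (iteratedDeriv n fun w => ∑ i ∈ s, F i w) :=
    ((Differentiable.fun_sum fun i _ => hF i).contDiff (n := ⊤)).differentiable_iteratedDeriv n
      (by simp)
  have hlim (n : ℕ) : TendstoLocallyUniformlyOn
      (fun s : Finset ι => iteratedDeriv n fun w => ∑ i ∈ s, F i w)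
      (iteratedDeriv n fun w => ∑' i, F i w) atTop Set.univ := by
    induction n with
    | zero =>
      simpa only [iteratedDeriv_zero] using tendstoLocallyUniformlyOn_sum_of_ball_bound hbound
    | succ n ih =>
      simp only [iteratedDeriv_succ]
      exact ih.deriv (.of_forall fun s => (hdiff s n).differentiableOn) isOpen_univ
  exact ((hlim N).tendsto_at (Set.mem_univ z)).congr fun s =>
    iteratedDeriv_fun_sum fun i _ => (hF i).contDiff.contDiffAt

end EntireSeries

section CosSqrt

/-- The entire function `z ↦ cos √z`, given by its power series. -/
noncomputable def cosSqrt (z : ℂ) : ℂ :=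
  ∑' n : ℕ, (-1) ^ n * z ^ n / (2 * n).factorial

theorem cosSqrt_sq (ζ : ℂ) : cosSqrt (ζ ^ 2) = Complex.cos ζ := by
  simpa only [cosSqrt, ← pow_mul] using (Complex.hasSum_cos ζ).tsum_eq

theorem differentiable_cosSqrt : Differentiable ℂ cosSqrt := by
  refine differentiable_tsum_of_ball_bound (fun n => by fun_prop) fun r => ?_
  refine ⟨_, (Real.hasSum_cosh √r).summable, fun n z hz => ?_⟩
  have hzr : ‖z‖ < r := mem_ball_zero_iff.mp hz
  simp only [pow_mul √r, Real.sq_sqrt ((norm_nonneg z).trans hzr.le), norm_div, norm_mul, norm_pow,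
    norm_neg, norm_one, one_pow, one_mul, Complex.norm_natCast]
  gcongr

theorem two_mul_mul_deriv_cosSqrt_sq (ζ : ℂ) :
    2 * ζ * deriv cosSqrt (ζ ^ 2) = -Complex.sin ζ := by
  have h := (differentiable_cosSqrt (ζ ^ 2)).hasDerivAt.comp ζ (hasDerivAt_pow 2 ζ)
  rw [show cosSqrt ∘ (· ^ 2) = Complex.cos from funext cosSqrt_sq] at h
  linear_combination h.unique (Complex.hasDerivAt_cos ζ)

theorem two_mul_deriv_cosSqrt_sq_add (ζ : ℂ) :
    2 * deriv cosSqrt (ζ ^ 2) + 4 * ζ ^ 2 * deriv (deriv cosSqrt) (ζ ^ 2) = -Complex.cos ζ := by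
  have hC' : HasDerivAt (deriv cosSqrt) (deriv (deriv cosSqrt) (ζ ^ 2)) (ζ ^ 2) :=
    (differentiable_cosSqrt.deriv (ζ ^ 2)).hasDerivAt
  have h := ((hasDerivAt_id ζ).const_mul 2).mul (hC'.comp ζ (hasDerivAt_pow 2 ζ))
  rw [show ((fun w => 2 * id w) * deriv cosSqrt ∘ (· ^ 2)) = fun w => -Complex.sin w from
    funext two_mul_mul_deriv_cosSqrt_sq] at h
  have heq := h.unique (Complex.hasDerivAt_sin ζ).neg
  simp only [id, Function.comp_apply] at heq
  linear_combination heq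

/-- The image of the strip `|re ζ| < π` under `ζ ↦ ζ ^ 2`, which is the interior of a parabola. -/
def sqStrip : Set ℂ :=
  {z | ‖z‖ + z.re < 2 * π ^ 2}

theorem isOpen_sqStrip : IsOpen sqStrip :=
  isOpen_lt (by fun_prop) continuous_const

theorem norm_add_re_sq (ζ : ℂ) : ‖ζ ^ 2‖ + (ζ ^ 2).re = 2 * ζ.re ^ 2 := by
  rw [norm_pow, Complex.sq_norm, Complex.normSq_apply, sq ζ, Complex.mul_re]
  ring

theorem sq_mem_sqStrip {ζ : ℂ} : ζ ^ 2 ∈ sqStrip ↔ |ζ.re| < π := by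
  rw [sqStrip, Set.mem_ofPred_eq, norm_add_re_sq, mul_lt_mul_iff_right₀ two_pos, ← sq_abs,
    sq_lt_sq₀ (abs_nonneg _) pi_pos.le]

theorem sin_ne_zero_of_abs_re_lt {ζ : ℂ} (hζ : ζ ≠ 0) (hre : |ζ.re| < π) :
    Complex.sin ζ ≠ 0 := by
  rw [Ne, Complex.sin_eq_zero_iff]
  rintro ⟨k, rfl⟩
  have hkπ : |(k : ℝ)| * π < 1 * π := by simpa [abs_mul, abs_of_pos pi_pos] using hre
  have hk : |(k : ℝ)| < 1 := lt_of_mul_lt_mul_right hkπ pi_pos.le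
  have hk0 : k = 0 := Int.abs_lt_one_iff.mp (mod_cast hk)
  exact hζ (by simp [hk0])

theorem deriv_cosSqrt_ne_zero {z : ℂ} (hz : z ∈ sqStrip) : deriv cosSqrt z ≠ 0 := by
  obtain ⟨ζ, rfl⟩ := IsAlgClosed.exists_pow_nat_eq z two_pos
  intro h0
  rcases eq_or_ne ζ 0 with rfl | hζ
  · have h := two_mul_deriv_cosSqrt_sq_add 0
    rw [h0, Complex.cos_zero] at h
    norm_num at h
  · have h := two_mul_mul_deriv_cosSqrt_sq ζ
    rw [h0, mul_zero, zero_eq_neg] at h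
    exact sin_ne_zero_of_abs_re_lt hζ (sq_mem_sqStrip.mp hz) h

theorem deriv_cosSqrt_sq {ζ : ℂ} (hζ : ζ ≠ 0) :
    deriv cosSqrt (ζ ^ 2) = -(Complex.sin ζ / (2 * ζ)) := by
  rw [eq_neg_iff_add_eq_zero]
  field_simp
  linear_combination two_mul_mul_deriv_cosSqrt_sq ζ

theorem logDeriv_deriv_cosSqrt_sq {ζ : ℂ} (hζ : ζ ≠ 0) (hsin : Complex.sin ζ ≠ 0) :
    logDeriv (deriv cosSqrt) (ζ ^ 2) =
      -((Complex.sin ζ - ζ * Complex.cos ζ) / (2 * ζ ^ 2 * Complex.sin ζ)) := by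
  have h := two_mul_deriv_cosSqrt_sq_add ζ
  rw [logDeriv_apply, deriv_cosSqrt_sq hζ] at *
  field_simp at h ⊢
  linear_combination -h

end CosSqrt

section Theta

theorem hasSum_nat_succ_add_neg_succ {E : Type*} [AddCommGroup E] [TopologicalSpace E]
    [IsTopologicalAddGroup E] {f : ℤ → E} {a : E} (hf : HasSum f a) :
    HasSum (fun n : ℕ => f (n + 1) + f (-(n + 1))) (a - f 0) := by
  simpa using (hasSum_nat_add_iff' 1).mpr hf.nat_add_neg

theorem norm_jacobiTheta₂_sub_one_le {z τ : ℂ} {r : ℝ} (hr : r < 1)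
    (hzr : Real.exp (-π * (τ.im - 2 * |z.im|)) ≤ r) :
    ‖jacobiTheta₂ z τ - 1‖ ≤ 2 * r / (1 - r) := by
  have hr0 : 0 < r := (Real.exp_pos _).trans_le hzr
  have hgap : 2 * |z.im| < τ.im := by
    have h := Real.exp_lt_one_iff.mp (hzr.trans_lt hr)
    nlinarith [pi_pos]
  have hτ : 0 < τ.im := (by positivity : (0 : ℝ) ≤ 2 * |z.im|).trans_lt hgap
  have hterm (n : ℕ) (hn : 1 ≤ n) (m : ℤ) (hm : |m| = n) : ‖jacobiTheta₂_term m z τ‖ ≤ r ^ n := by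
    calc ‖jacobiTheta₂_term m z τ‖
        ≤ Real.exp (-π * (τ.im * m ^ 2 - 2 * |z.im| * |m|)) :=
          norm_jacobiTheta₂_term_le hτ le_rfl le_rfl m
      _ ≤ Real.exp (n * (-π * (τ.im - 2 * |z.im|))) := by
        have hn' : (1 : ℝ) ≤ n := mod_cast hn
        have hmul : 0 ≤ π * τ.im * (n * (n - 1)) := by
          have := sub_nonneg.mpr hn'
          have := pi_pos
          positivity
        rw [← sq_abs (m : ℝ), ← Int.cast_abs, hm, Int.cast_natCast, Real.exp_le_exp]
        linear_combination hmul
      _ ≤ r ^ n := by rw [Real.exp_nat_mul]; gcongr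
  have hsum : HasSum (fun n : ℕ => jacobiTheta₂_term (n + 1) z τ + jacobiTheta₂_term (-(n + 1)) z τ)
      (jacobiTheta₂ z τ - 1) := by
    simpa [jacobiTheta₂_term] using
      hasSum_nat_succ_add_neg_succ (hasSum_jacobiTheta₂_term z hτ)
  have hgeom : HasSum (fun n : ℕ => 2 * r * r ^ n) (2 * r / (1 - r)) :=
    (hasSum_geometric_of_lt_one hr0.le hr).mul_left _
  refine hsum.norm_le_of_bounded hgeom fun n => ?_
  calc _ ≤ r ^ (n + 1) + r ^ (n + 1) :=
        norm_add_le_of_le (hterm _ (by lia) _ (by push_cast; exact abs_of_nonneg (by positivity)))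
          (hterm _ (by lia) _ (by rw [abs_neg]; push_cast; exact abs_of_nonneg (by positivity)))
    _ = 2 * r * r ^ n := by ring

/-- The theta series `∑ₙ exp (-n² t) Tₙ(x)` over `n : ℤ`, i.e. Jacobi's theta function in the
variable `x = cos ζ`; up to a constant, the heat kernel of the circle. -/
noncomputable def chebyshevTheta (t : ℝ) (x : ℂ) : ℂ :=
  ∑' n : ℤ, Complex.exp (-n ^ 2 * t) * (Polynomial.Chebyshev.T ℂ n).eval x

theorem norm_eval_chebyshevT_le (n : ℤ) (x : ℂ) :
    ‖(Polynomial.Chebyshev.T ℂ n).eval x‖ ≤ (2 * ‖x‖ + 1) ^ n.natAbs := by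
  rw [← Polynomial.Chebyshev.T_natAbs]
  induction n.natAbs using Nat.twoStepInduction with
  | zero => simp
  | one =>
    rw [Nat.cast_one, Polynomial.Chebyshev.T_one, Polynomial.eval_X, pow_one]
    linarith [norm_nonneg x]
  | more n ih₀ ih₁ =>
    push_cast
    rw [Polynomial.Chebyshev.T_add_two, Polynomial.eval_sub, Polynomial.eval_mul]
    calc _ ≤ 2 * ‖x‖ * (2 * ‖x‖ + 1) ^ (n + 1) + (2 * ‖x‖ + 1) ^ n := by
          refine norm_sub_le_of_le ?_ ih₀
          simpa using mul_le_mul_of_nonneg_left ih₁ (by positivity : 0 ≤ 2 * ‖x‖)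
      _ ≤ 2 * ‖x‖ * (2 * ‖x‖ + 1) ^ (n + 1) + (2 * ‖x‖ + 1) ^ (n + 1) := by
        gcongr
        · linarith [norm_nonneg x]
        · exact n.le_succ
      _ = (2 * ‖x‖ + 1) ^ (n + 2) := by ring

theorem summable_exp_neg_sq_mul_pow_natAbs {t M : ℝ} (ht : 0 < t) (hM : 0 < M) :
    Summable fun n : ℤ => Real.exp (-n ^ 2 * t) * M ^ n.natAbs := by
  convert summable_pow_mul_jacobiTheta₂_term_bound (Real.log M / (2 * π)) (div_pos ht pi_pos) 0
    using 2 with n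
  rw [← Real.exp_log hM, ← Real.exp_nat_mul, ← Real.exp_add, Nat.cast_natAbs, Real.log_exp,
    pow_zero, one_mul, Int.cast_abs]
  congr 1
  field_simp
  ring

theorem chebyshevTheta_ball_bound {t : ℝ} (ht : 0 < t) (r : ℝ) :
    ∃ u : ℤ → ℝ, Summable u ∧ ∀ n : ℤ, ∀ x ∈ Metric.ball (0 : ℂ) r,
      ‖Complex.exp (-n ^ 2 * t) * (Polynomial.Chebyshev.T ℂ n).eval x‖ ≤ u n := by
  refine ⟨_, summable_exp_neg_sq_mul_pow_natAbs ht (by positivity : 0 < 2 * |r| + 1),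
    fun n x hx => ?_⟩
  have hexp : ‖Complex.exp (-n ^ 2 * t)‖ = Real.exp (-n ^ 2 * t) := by
    rw [Complex.norm_exp]
    congr 1
    norm_cast
  have hxr : ‖x‖ ≤ |r| := (mem_ball_zero_iff.mp hx).le.trans (le_abs_self r)
  rw [norm_mul, hexp]
  gcongr
  exact (norm_eval_chebyshevT_le n x).trans (by gcongr)

theorem differentiable_chebyshevTheta {t : ℝ} (ht : 0 < t) :
    Differentiable ℂ (chebyshevTheta t) :=
  differentiable_tsum_of_ball_bound (fun _ => (Polynomial.differentiable _).const_mul _)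
    (chebyshevTheta_ball_bound ht)

theorem iteratedDeriv_eval {𝕜 : Type*} [NontriviallyNormedField 𝕜] (N : ℕ) (p : Polynomial 𝕜) :
    iteratedDeriv N (fun x => p.eval x) = fun x => (Polynomial.derivative^[N] p).eval x := by
  induction N with
  | zero => rfl
  | succ N ih =>
    rw [iteratedDeriv_succ, ih, Function.iterate_succ_apply']
    exact funext fun x => Polynomial.deriv _

theorem hasSum_iteratedDeriv_chebyshevTheta {t : ℝ} (ht : 0 < t) (N : ℕ) (x : ℂ) :
    HasSum (fun n : ℤ => Complex.exp (-n ^ 2 * t) *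
        (Polynomial.derivative^[N] (Polynomial.Chebyshev.T ℂ n)).eval x)
      (iteratedDeriv N (chebyshevTheta t) x) := by
  have h := hasSum_iteratedDeriv_tsum_of_ball_bound
    (F := fun (n : ℤ) x => Complex.exp (-n ^ 2 * t) * (Polynomial.Chebyshev.T ℂ n).eval x)
    (fun _ => (Polynomial.differentiable _).const_mul _) (chebyshevTheta_ball_bound ht) N x
  simp only [iteratedDeriv_const_mul_field, iteratedDeriv_eval] at h
  exact h

theorem chebyshevTheta_cos {t : ℝ} (ht : 0 < t) (ζ : ℂ) :
    chebyshevTheta t (Complex.cos ζ) = jacobiTheta₂ (ζ / (2 * π)) (Complex.I * t / π) := by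
  have hτ : 0 < (Complex.I * t / π).im := by
    rw [mul_div_assoc, ← Complex.ofReal_div, Complex.I_mul_im, Complex.ofReal_re]
    exact div_pos ht pi_pos
  have hsum := hasSum_jacobiTheta₂_term (ζ / (2 * π)) hτ
  have hneg := hasSum_jacobiTheta₂_term (-(ζ / (2 * π))) hτ
  rw [jacobiTheta₂_neg_left] at hneg
  have hmean := (hsum.add hneg).div_const 2
  rw [add_self_div_two] at hmean
  rw [← hmean.tsum_eq, chebyshevTheta]
  refine tsum_congr fun n => ?_
  have hexp (w : ℂ) : jacobiTheta₂_term n (w / (2 * π)) (Complex.I * t / π) =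
      Complex.exp (-n ^ 2 * t) * Complex.exp (n * w * Complex.I) := by
    rw [jacobiTheta₂_term, ← Complex.exp_add]
    congr 1
    field_simp
    linear_combination (n : ℂ) ^ 2 * t * Complex.I_sq
  rw [← neg_div, hexp, hexp, Polynomial.Chebyshev.T_complex_cos, Complex.cos]
  ring_nf

/-- The leading amplitude of the circle heat kernel in the variable `z = ζ ^ 2`. -/
noncomputable def thetaAmplitude (t : ℝ) (z : ℂ) : ℂ :=
  √(t / π) * Complex.exp (z / (4 * t)) * chebyshevTheta t (cosSqrt z)

theorem thetaAmplitude_sq {t : ℝ} (ht : 0 < t) (ζ : ℂ) :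
    thetaAmplitude t (ζ ^ 2) = jacobiTheta₂ (-Complex.I * ζ / (2 * t)) (Complex.I * π / t) := by
  have htC : (t : ℂ) ≠ 0 := Complex.ofReal_ne_zero.mpr ht.ne'
  have hsqrt : (-Complex.I * (Complex.I * t / π)) ^ (1 / 2 : ℂ) = (√(t / π) : ℂ) := by
    have hbase : -Complex.I * (Complex.I * t / π) = (t / π : ℝ) := by
      push_cast
      linear_combination -(t / π : ℂ) * Complex.I_sq
    rw [hbase, Real.sqrt_eq_rpow, Complex.ofReal_cpow (div_pos ht pi_pos).le]
    norm_num
  have harg : ζ / (2 * π) / (Complex.I * t / π) = -Complex.I * ζ / (2 * t) := by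
    field_simp
    simp
  have hmod : -1 / (Complex.I * t / π) = Complex.I * π / t := by
    field_simp
    simp
  have hexp : -π * Complex.I * (ζ / (2 * π)) ^ 2 / (Complex.I * t / π) = -(ζ ^ 2 / (4 * t)) := by
    field_simp
    ring
  have hsqrt0 : (√(t / π) : ℂ) ≠ 0 := by
    have := pi_pos
    exact Complex.ofReal_ne_zero.mpr (by positivity)
  rw [thetaAmplitude, cosSqrt_sq, chebyshevTheta_cos ht, jacobiTheta₂_functional_equation, hsqrt,
    harg, hmod, hexp, Complex.exp_neg]
  field_simp

theorem differentiable_thetaAmplitude {t : ℝ} (ht : 0 < t) :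
    Differentiable ℂ (thetaAmplitude t) := by
  have := (differentiable_chebyshevTheta ht).comp differentiable_cosSqrt
  unfold thetaAmplitude
  fun_prop

theorem exists_le_pi_sub_abs_re {K : Set ℂ} (hK : IsCompact K) (hKU : K ⊆ sqStrip) :
    ∃ c > 0, ∀ ζ : ℂ, ζ ^ 2 ∈ K → c ≤ π - |ζ.re| := by
  have hsqrt (ζ : ℂ) : √((‖ζ ^ 2‖ + (ζ ^ 2).re) / 2) = |ζ.re| := by
    rw [norm_add_re_sq, mul_div_cancel_left₀ _ two_ne_zero, Real.sqrt_sq_eq_abs]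
  have hcont : Continuous fun z : ℂ => π - √((‖z‖ + z.re) / 2) := by fun_prop
  have hpos (z : ℂ) (hz : z ∈ K) : 0 < π - √((‖z‖ + z.re) / 2) := by
    obtain ⟨ζ, rfl⟩ := IsAlgClosed.exists_pow_nat_eq z two_pos
    rw [hsqrt, sub_pos]
    exact sq_mem_sqStrip.mp (hKU hz)
  obtain ⟨c, hc0, hc⟩ := hK.exists_forall_le' hcont.continuousOn hpos
  exact ⟨c, hc0, fun ζ hζ => hsqrt ζ ▸ hc _ hζ⟩

theorem norm_thetaAmplitude_sq_sub_one_le {t c : ℝ} (ht : 0 < t) (hc : 0 < c) {ζ : ℂ}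
    (hζ : c ≤ π - |ζ.re|) :
    ‖thetaAmplitude t (ζ ^ 2) - 1‖ ≤
      2 * Real.exp (-(π * c / t)) / (1 - Real.exp (-(π * c / t))) := by
  rw [thetaAmplitude_sq ht]
  have him : (-Complex.I * ζ / (2 * t)).im = -(ζ.re / (2 * t)) := by
    rw [← Complex.ofReal_ofNat, ← Complex.ofReal_mul, Complex.div_ofReal_im]
    simp [neg_div]
  have hmod : (Complex.I * π / t).im = π / t := by
    rw [Complex.div_ofReal_im, Complex.I_mul_im, Complex.ofReal_re]
  have hpos : 0 < π * c / t := div_pos (mul_pos pi_pos hc) ht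
  refine norm_jacobiTheta₂_sub_one_le (Real.exp_lt_one_iff.mpr (neg_neg_of_pos hpos)) ?_
  rw [him, hmod, abs_neg, abs_div, abs_of_pos (by positivity : 0 < 2 * t), Real.exp_le_exp]
  calc -π * (π / t - 2 * (|ζ.re| / (2 * t))) = -(π * (π - |ζ.re|) / t) := by field_simp
    _ ≤ -(π * c / t) := by gcongr

theorem exp_neg_le_two_div_sq {x : ℝ} (hx : 0 < x) : Real.exp (-x) ≤ 2 / x ^ 2 := by
  rw [Real.exp_neg, inv_le_comm₀ (Real.exp_pos _) (by positivity), inv_div]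
  linarith [Real.quadratic_le_exp_of_nonneg hx.le]

theorem holBigO_thetaAmplitude_sub_one :
    HolBigO 2 sqStrip fun t z => thetaAmplitude t z - 1 where
  differentiableOn t ht := ((differentiable_thetaAmplitude ht.1).sub_const 1).differentiableOn
  exists_bound K hKU hK := by
    obtain ⟨c, hc0, hc⟩ := exists_le_pi_sub_abs_re hK hKU
    have hb0 : 0 < π * c := mul_pos pi_pos hc0
    have hgap : 0 < 1 - Real.exp (-(π * c)) :=
      sub_pos.mpr (Real.exp_lt_one_iff.mpr (neg_neg_of_pos hb0))
    refine ⟨4 / ((π * c) ^ 2 * (1 - Real.exp (-(π * c)))), fun t ht z hz => ?_⟩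
    obtain ⟨ζ, rfl⟩ := IsAlgClosed.exists_pow_nat_eq z two_pos
    have ht0 := ht.1
    calc _ ≤ 2 * Real.exp (-(π * c / t)) / (1 - Real.exp (-(π * c / t))) :=
          norm_thetaAmplitude_sq_sub_one_le ht0 hc0 (hc ζ hz)
      _ ≤ 2 * (2 / (π * c / t) ^ 2) / (1 - Real.exp (-(π * c))) := by
        gcongr
        · exact exp_neg_le_two_div_sq (div_pos hb0 ht0)
        · exact le_div_self hb0.le ht0 ht.2
      _ = _ := by field_simp; ring

end Theta

section Gegenbauer

open Polynomial Finset.HasAntidiagonal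
open Polynomial.Chebyshev (T U U_add_two T_derivative_eq_U natDegree_T)

theorem chebyshevU_eq_sum_choose (R : Type*) [CommRing R] (m : ℕ) :
    U R m = ∑ p ∈ antidiagonal m, (-1) ^ p.2 * (p.1.choose p.2 : R[X]) * (2 * X) ^ (p.1 - p.2) := by
  induction m using Nat.twoStepInduction with
  | zero => simp
  | one => simp [Finset.Nat.antidiagonal_succ]
  | more m ih₀ ih₁ =>
    have hstep (p : ℕ × ℕ) : (-1) ^ (p.2 + 1) * ((p.1 + 1).choose (p.2 + 1) : R[X]) *
          (2 * X) ^ (p.1 + 1 - (p.2 + 1)) =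
        2 * X * ((-1) ^ (p.2 + 1) * (p.1.choose (p.2 + 1) : R[X]) * (2 * X) ^ (p.1 - (p.2 + 1))) -
          (-1) ^ p.2 * (p.1.choose p.2 : R[X]) * (2 * X) ^ (p.1 - p.2) := by
      rw [Nat.choose_succ_succ, Nat.add_sub_add_right]
      rcases lt_or_ge p.2 p.1 with h | h
      · rw [show p.1 - p.2 = p.1 - (p.2 + 1) + 1 by lia]
        push_cast
        ring
      · rw [Nat.choose_eq_zero_of_lt (Nat.lt_succ_of_le h)]
        push_cast
        ring
    push_cast at ih₁ ⊢
    rw [U_add_two, ih₀, ih₁, Finset.Nat.antidiagonal_succ_succ', Finset.Nat.antidiagonal_succ']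
    simp only [Finset.sum_cons, Finset.sum_map, Function.Embedding.coe_prodMap,
      Function.Embedding.coeFn_mk, Prod.map, Function.Embedding.refl_apply, Nat.succ_eq_add_one,
      hstep, Finset.sum_sub_distrib, ← Finset.mul_sum]
    simp only [pow_zero, Nat.choose_zero_right, Nat.choose_zero_succ, Nat.cast_zero, Nat.cast_one,
      tsub_zero]
    ring

variable {K : Type*} [Field K]

/-- The Gegenbauer polynomial `C_m^l` (`X = x`). The index `p = (m - j, j)` runs over the usual sum
over `j ≤ m / 2`, the binomial coefficient being zero for all other `j`. -/
noncomputable def gegenbauer (l : K) (m : ℕ) : K[X] :=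
  ∑ p ∈ antidiagonal m,
    C ((-1) ^ p.2 * p.1.choose p.2 * (ascPochhammer K p.1).eval l / p.1.factorial) *
      (2 * X) ^ (p.1 - p.2)

variable [CharZero K]

theorem gegenbauer_one (m : ℕ) : gegenbauer (1 : K) m = U K m := by
  rw [chebyshevU_eq_sum_choose, gegenbauer]
  refine Finset.sum_congr rfl fun p _ => ?_
  rw [ascPochhammer_eval_one, mul_div_cancel_right₀ _ (Nat.cast_ne_zero.mpr p.1.factorial_ne_zero)]
  simp

theorem derivative_gegenbauer_succ (l : K) (m : ℕ) :
    derivative (gegenbauer l (m + 1)) = C (2 * l) * gegenbauer (l + 1) m := by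
  have hfirst : C ((-1) ^ (m + 1) * (Nat.choose 0 (m + 1) : K) * (ascPochhammer K 0).eval l /
      Nat.factorial 0) * (2 * X) ^ (0 - (m + 1)) = 0 := by simp
  rw [gegenbauer, gegenbauer, Finset.Nat.sum_antidiagonal_succ, hfirst, zero_add, derivative_sum,
    Finset.mul_sum]
  refine Finset.sum_congr rfl fun p _ => ?_
  have hchoose : ((p.1 + 1).choose p.2 * (p.1 + 1 - p.2 : ℕ) : K) = p.1.choose p.2 * (p.1 + 1) :=
    mod_cast (Nat.choose_mul_succ_eq p.1 p.2).symm
  have hpoch : (ascPochhammer K (p.1 + 1)).eval l = l * (ascPochhammer K p.1).eval (l + 1) := by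
    simp [ascPochhammer_succ_left]
  have hcoeff : (-1) ^ p.2 * ((p.1 + 1).choose p.2 : K) * (ascPochhammer K (p.1 + 1)).eval l /
        (p.1 + 1).factorial * (2 * (p.1 + 1 - p.2 : ℕ)) =
      2 * l * ((-1) ^ p.2 * p.1.choose p.2 * (ascPochhammer K p.1).eval (l + 1) /
        p.1.factorial) := by
    have hsucc : (p.1 + 1 : K) ≠ 0 := p.1.cast_add_one_ne_zero
    have hfact : (p.1.factorial : K) ≠ 0 := Nat.cast_ne_zero.mpr p.1.factorial_ne_zero
    rw [hpoch, Nat.factorial_succ, Nat.cast_mul, Nat.cast_succ]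
    field_simp
    linear_combination l * (ascPochhammer K p.1).eval (l + 1) * hchoose
  have hX : derivative (2 * X : K[X]) = C 2 := by
    rw [← C_ofNat, derivative_C_mul_X]
  have hexp : p.1 + 1 - p.2 - 1 = p.1 - p.2 := by lia
  dsimp only
  rw [derivative_C_mul, derivative_pow, hX, hexp, ← mul_assoc (C (2 * l)), ← C_mul, ← hcoeff]
  simp only [C_mul, map_natCast]
  ring

theorem iterate_derivative_chebyshevU (m k : ℕ) :
    derivative^[k] (U K (m + k : ℕ)) = C (2 ^ k * k.factorial : K) * gegenbauer (k + 1 : K) m := by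
  induction k generalizing m with
  | zero => simp [gegenbauer_one]
  | succ k ih =>
    rw [Function.iterate_succ_apply', show m + (k + 1) = m + 1 + k by ring, ih, derivative_C_mul,
      derivative_gegenbauer_succ, ← mul_assoc, ← C_mul, Nat.factorial_succ]
    push_cast
    ring_nf

theorem iterate_derivative_chebyshevT (m k : ℕ) :
    derivative^[k + 1] (T K (m + k + 1 : ℕ)) =
      C ((m + k + 1) * 2 ^ k * k.factorial : K) * gegenbauer (k + 1 : K) m := by
  have hderiv : derivative (T K (m + k + 1 : ℕ)) = C (m + k + 1 : K) * U K (m + k : ℕ) := by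
    rw [T_derivative_eq_U]
    simp
  rw [Function.iterate_succ_apply, hderiv, iterate_derivative_C_mul, iterate_derivative_chebyshevU,
    ← mul_assoc, ← C_mul, mul_assoc]

theorem iterate_derivative_chebyshevT_eq_zero {n k : ℕ} (h : n < k) :
    derivative^[k] (T K n) = 0 :=
  iterate_derivative_eq_zero (by simpa [natDegree_T] using h)

theorem geg5_eq_eval_gegenbauer (m : ℕ) (x : ℝ) : geg5 m x = (gegenbauer (5 : ℝ) m).eval x := by
  have hterm (j : ℕ) (hj : j ∈ Finset.range (m / 2 + 1)) :
      (-1 : ℝ) ^ j * (Nat.factorial (m - j + 4)) /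
          ((Nat.factorial 4) * (Nat.factorial j) * (Nat.factorial (m - 2 * j))) =
        (-1) ^ j * (m - j).choose j * (ascPochhammer ℝ (m - j)).eval 5 / (m - j).factorial := by
    have hj2 : 2 * j ≤ m := by grind
    have hpoch : (ascPochhammer ℝ (m - j)).eval 5 = (m - j + 4).factorial / Nat.factorial 4 := by
      rw [← Nat.cast_ofNat, ascPochhammer_nat_eq_natCast_ascFactorial,
        eq_div_iff (Nat.cast_ne_zero.mpr (Nat.factorial_ne_zero 4)), add_comm (m - j) 4,
        ← Nat.factorial_mul_ascFactorial, Nat.cast_mul, mul_comm]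
    rw [hpoch, Nat.cast_choose ℝ (show j ≤ m - j by lia), show m - j - j = m - 2 * j by lia]
    field_simp
  rw [geg5, gegenbauer, eval_finsetSum, ← Finset.Nat.sum_antidiagonal_swap,
    Finset.Nat.sum_antidiagonal_eq_sum_range_succ_mk]
  refine (Finset.sum_congr rfl fun j hj => ?_).trans
    (Finset.sum_subset (Finset.range_mono (by lia)) fun j hj hj' => ?_)
  · rw [hterm j hj, Prod.fst_swap, Prod.snd_swap, two_mul j, Nat.sub_add_eq]
    simp only [eval_mul, eval_C, eval_pow, eval_ofNat, eval_X]
  · rw [Prod.fst_swap, Prod.snd_swap, Nat.choose_eq_zero_of_lt (by grind)]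
    simp

end Gegenbauer

section HeatKernel

open Polynomial
open Polynomial.Chebyshev (T T_neg T_zero map_T)

/-- The heat kernel of the round sphere `S^(2N+1)` as a function of the cosine of the distance,
given by its expansion in spherical harmonics. -/
noncomputable def oddSphereHeatKernel (N : ℕ) (t x : ℝ) : ℝ :=
  Real.Gamma N / (2 * π ^ (N + 1)) *
    ∑' m : ℕ, (m + N) * Real.exp (-((m * (m + 2 * N) : ℕ) : ℝ) * t) * (gegenbauer (N : ℝ) m).eval x

theorem qS11_eq_oddSphereHeatKernel : qS11 = oddSphereHeatKernel 5 := by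
  ext t x
  simp [qS11, oddSphereHeatKernel, geg5_eq_eval_gegenbauer]

theorem eval_ofReal_iterate_derivative_chebyshevT (k : ℕ) (n : ℤ) (x : ℝ) :
    (derivative^[k] (T ℂ n)).eval (x : ℂ) = ((derivative^[k] (T ℝ n)).eval x : ℝ) := by
  rw [← map_T Complex.ofRealHom, iterate_derivative_map]
  exact eval_map_apply (f := Complex.ofRealHom) x

theorem hasSum_gegenbauer_iteratedDeriv_chebyshevTheta {t : ℝ} (ht : 0 < t) (k : ℕ) (x : ℝ) :
    HasSum (fun m : ℕ => ((2 * (Real.exp (-(m + k + 1) ^ 2 * t) *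
        ((m + k + 1) * 2 ^ k * k.factorial * (gegenbauer (k + 1 : ℝ) m).eval x)) : ℝ) : ℂ))
      (iteratedDeriv (k + 1) (chebyshevTheta t) x) := by
  have hpair : HasSum (fun n : ℕ => ((2 * (Real.exp (-(n + 1) ^ 2 * t) *
      (derivative^[k + 1] (T ℝ (n + 1 : ℕ))).eval x) : ℝ) : ℂ))
      (iteratedDeriv (k + 1) (chebyshevTheta t) x) := by
    have h := hasSum_nat_succ_add_neg_succ (hasSum_iteratedDeriv_chebyshevTheta ht (k + 1) x)
    rw [T_zero, iterate_derivative_one (Nat.succ_pos k), eval_zero, mul_zero, sub_zero] at h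
    refine h.congr_fun fun n => ?_
    rw [T_neg, eval_ofReal_iterate_derivative_chebyshevT]
    push_cast
    ring_nf
  have hlow (i : ℕ) (hi : i ∈ Finset.range k) : ((2 * (Real.exp (-(i + 1) ^ 2 * t) *
      (derivative^[k + 1] (T ℝ (i + 1 : ℕ))).eval x) : ℝ) : ℂ) = 0 := by
    rw [iterate_derivative_chebyshevT_eq_zero (Nat.succ_lt_succ (Finset.mem_range.mp hi)),
      eval_zero, mul_zero, mul_zero, Complex.ofReal_zero]
  have hshift := (hasSum_nat_add_iff' k).mpr hpair
  rw [Finset.sum_eq_zero hlow, sub_zero] at hshift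
  refine hshift.congr_fun fun m => ?_
  have hT := iterate_derivative_chebyshevT (K := ℝ) m k
  push_cast at hT ⊢
  rw [hT, eval_C_mul]
  push_cast
  rfl

theorem ofReal_oddSphereHeatKernel {N : ℕ} (hN : N ≠ 0) {t : ℝ} (ht : 0 < t) (x : ℝ) :
    (oddSphereHeatKernel N t x : ℂ) =
      Complex.exp (N ^ 2 * t) / (2 * π) ^ (N + 1) * iteratedDeriv N (chebyshevTheta t) x := by
  obtain ⟨k, rfl⟩ := Nat.exists_eq_succ_of_ne_zero hN
  have hterm (m : ℕ) : Real.exp (-((m * (m + 2 * (k + 1)) : ℕ) : ℝ) * t) =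
      Real.exp ((k + 1) ^ 2 * t) * Real.exp (-(m + k + 1) ^ 2 * t) := by
    rw [← Real.exp_add]
    congr 1
    push_cast
    ring
  have hseries : iteratedDeriv (k + 1) (chebyshevTheta t) x =
      ((∑' m : ℕ, 2 * (Real.exp (-(m + k + 1) ^ 2 * t) *
        ((m + k + 1) * 2 ^ k * k.factorial * (gegenbauer (k + 1 : ℝ) m).eval x)) : ℝ) : ℂ) := by
    rw [Complex.ofReal_tsum, (hasSum_gegenbauer_iteratedDeriv_chebyshevTheta ht k x).tsum_eq]
  have hcoef : Complex.exp ((k + 1 : ℕ) ^ 2 * t) / (2 * π) ^ (k + 1 + 1) =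
      (Real.exp ((k + 1) ^ 2 * t) / (2 * π) ^ (k + 1 + 1) : ℝ) := by
    push_cast
    rfl
  rw [hseries, hcoef, ← Complex.ofReal_mul, oddSphereHeatKernel, ← tsum_mul_left, ← tsum_mul_left]
  refine congrArg _ (tsum_congr fun m => ?_)
  rw [hterm, Nat.succ_eq_add_one, Nat.cast_succ, Real.Gamma_nat_eq_factorial]
  field_simp
  ring

end HeatKernel

section SmallTime

theorem chebyshevTheta_cosSqrt {t : ℝ} (ht : 0 < t) (z : ℂ) :
    chebyshevTheta t (cosSqrt z) =
      √(π / t) * Complex.exp (-z / (4 * t)) * thetaAmplitude t z := by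
  have hsqrt : (√(π / t) * √(t / π) : ℂ) = 1 := by
    rw [← Complex.ofReal_mul, ← Real.sqrt_mul (div_pos pi_pos ht).le, div_mul_div_cancel₀ ht.ne',
      div_self pi_ne_zero, Real.sqrt_one, Complex.ofReal_one]
  have hexp : Complex.exp (-z / (4 * t)) * Complex.exp (z / (4 * t)) = 1 := by
    rw [← Complex.exp_add, neg_div, neg_add_cancel, Complex.exp_zero]
  rw [thetaAmplitude]
  linear_combination (-√(π / t) * √(t / π) * chebyshevTheta t (cosSqrt z)) * hexp -
    chebyshevTheta t (cosSqrt z) * hsqrt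

theorem iteratedDeriv_chebyshevTheta_cos {t : ℝ} (ht : 0 < t) {ζ : ℂ} (hζ : ζ ≠ 0)
    (hre : |ζ.re| < π) (N : ℕ) :
    (2 * t * (Complex.sin ζ / ζ)) ^ N * iteratedDeriv N (chebyshevTheta t) (Complex.cos ζ) =
      √(π / t) * Complex.exp (-ζ ^ 2 / (4 * t)) *
        amplitude cosSqrt t (thetaAmplitude t) N (ζ ^ 2) := by
  have hfactor : -(4 * t * deriv cosSqrt (ζ ^ 2)) = 2 * t * (Complex.sin ζ / ζ) := by
    rw [deriv_cosSqrt_sq hζ]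
    field_simp
    ring
  rw [← hfactor, ← cosSqrt_sq]
  exact iteratedDeriv_comp_eq_amplitude isOpen_sqStrip differentiable_cosSqrt.differentiableOn
    (fun _ => deriv_cosSqrt_ne_zero) ht.ne' (differentiable_thetaAmplitude ht).differentiableOn
    (differentiable_chebyshevTheta ht) (fun z _ => chebyshevTheta_cosSqrt ht z) N _
    (sq_mem_sqStrip.mpr hre)

theorem ofReal_oddSphereHeatKernel_eq_amplitude {N : ℕ} (hN : N ≠ 0) {t δ : ℝ} (ht : 0 < t)
    (hδ : δ ∈ Set.Ioo 0 π) :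
    (((4 * π * t) ^ ((2 * N + 1 : ℝ) / 2) * (Real.sin δ / δ) ^ N * Real.exp (δ ^ 2 / (4 * t)) *
        oddSphereHeatKernel N t (Real.cos δ) : ℝ) : ℂ) =
      Complex.exp (N ^ 2 * t) * amplitude cosSqrt t (thetaAmplitude t) N (δ ^ 2) := by
  have hampl := iteratedDeriv_chebyshevTheta_cos ht (Complex.ofReal_ne_zero.mpr hδ.1.ne')
    (by rw [Complex.ofReal_re, abs_of_pos hδ.1]; exact hδ.2) N
  have hpow : (4 * π * t) ^ ((2 * N + 1 : ℝ) / 2) =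
      (2 * π) ^ N * (2 * t) ^ N * √(4 * π * t) := by
    rw [add_div, mul_div_cancel_left₀ _ two_ne_zero, Real.rpow_add (by positivity),
      Real.rpow_natCast, ← Real.sqrt_eq_rpow, ← mul_pow]
    ring_nf
  have hsqrt : (√(4 * π * t) * √(π / t) : ℂ) = 2 * π := by
    rw [← Complex.ofReal_mul, ← Real.sqrt_mul (by positivity),
      show 4 * π * t * (π / t) = (2 * π) ^ 2 by field_simp; ring, Real.sqrt_sq (by positivity),
      Complex.ofReal_mul, Complex.ofReal_ofNat]
  have hexp : Complex.exp (δ ^ 2 / (4 * t)) * Complex.exp (-δ ^ 2 / (4 * t)) = 1 := by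
    rw [← Complex.exp_add, neg_div, add_neg_cancel, Complex.exp_zero]
  rw [hpow]
  calc _ = √(4 * π * t) / (2 * π) * Complex.exp (δ ^ 2 / (4 * t)) * Complex.exp (N ^ 2 * t) *
          ((2 * t * (Complex.sin δ / δ)) ^ N *
            iteratedDeriv N (chebyshevTheta t) (Complex.cos δ)) := by
        rw [Complex.ofReal_mul, ofReal_oddSphereHeatKernel hN ht, mul_pow (2 * t : ℂ)]
        push_cast
        field_simp
        ring
    _ = (√(4 * π * t) * √(π / t)) / (2 * π) *
          (Complex.exp (δ ^ 2 / (4 * t)) * Complex.exp (-δ ^ 2 / (4 * t))) *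
          (Complex.exp (N ^ 2 * t) * amplitude cosSqrt t (thetaAmplitude t) N (δ ^ 2)) := by
        rw [hampl]
        ring
    _ = _ := by rw [hsqrt, hexp, div_self (by simp [pi_ne_zero]), one_mul, one_mul]

theorem qS11_small_time_cos_general {N : ℕ} (hN : N ≠ 0) {b : ℝ} (hb : b < π) :
    ∃ C > (0 : ℝ), ∀ t ∈ Set.Ioc (0 : ℝ) 1, ∀ δ ∈ Set.Ioc 0 b,
      |(4 * π * t) ^ ((2 * N + 1 : ℝ) / 2) * (Real.sin δ / δ) ^ N * Real.exp (δ ^ 2 / (4 * t)) *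
            oddSphereHeatKernel N t (Real.cos δ)
          - 1 - (N ^ 2 - N * (N - 1) * (Real.sin δ - δ * Real.cos δ) / (δ ^ 2 * Real.sin δ)) * t|
        ≤ C * t ^ 2 := by
  have hexpansion := (holBigO_amplitude_sub isOpen_sqStrip differentiable_cosSqrt.differentiableOn
    (fun _ => deriv_cosSqrt_ne_zero) holBigO_thetaAmplitude_sub_one N).exp_mul (N ^ 2)
    ((differentiableOn_logDeriv isOpen_sqStrip
      (differentiable_cosSqrt.differentiableOn.deriv isOpen_sqStrip)
      fun _ => deriv_cosSqrt_ne_zero).const_mul _)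
  have hsub : (fun x : ℝ => (x : ℂ) ^ 2) '' Set.Icc 0 b ⊆ sqStrip := by
    rintro _ ⟨x, hx, rfl⟩
    rw [sq_mem_sqStrip, Complex.ofReal_re, abs_of_nonneg hx.1]
    exact hx.2.trans_lt hb
  obtain ⟨C, hC⟩ := hexpansion.exists_bound _ hsub (isCompact_Icc.image (by fun_prop))
  refine ⟨max C 1, by positivity, fun t ht δ hδ => ?_⟩
  have hδπ : δ ∈ Set.Ioo 0 π := ⟨hδ.1, hδ.2.trans_lt hb⟩
  have hsin : Complex.sin δ ≠ 0 := mod_cast (Real.sin_pos_of_mem_Ioo hδπ).ne'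
  calc _ ≤ C * t ^ 2 := by
        convert hC t ht _ ⟨δ, ⟨hδ.1.le, hδ.2⟩, rfl⟩ using 1
        rw [← ofReal_oddSphereHeatKernel_eq_amplitude hN ht.1 hδπ,
          logDeriv_deriv_cosSqrt_sq (Complex.ofReal_ne_zero.mpr hδ.1.ne') hsin, ← Real.norm_eq_abs,
          ← Complex.norm_real]
        congr 1
        push_cast
        ring
    _ ≤ max C 1 * t ^ 2 := by gcongr; exact le_max_left C 1

end SmallTime

/-- Uniform small-time asymptotics of the heat kernel of `S^11` at `cos δ`, uniformly for
`δ ∈ (0, π − ε]`. -/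
theorem qS11_small_time_cos (ε : ℝ) (hε : ε ∈ Set.Ioo 0 π) :
    ∃ C > (0 : ℝ), ∃ t₀ > (0 : ℝ), ∀ t ∈ Set.Ioo (0 : ℝ) t₀, ∀ δ ∈ Set.Ioc (0 : ℝ) (π - ε),
      |(4 * π * t) ^ ((11 : ℝ) / 2) * (Real.sin δ / δ) ^ 5 * Real.exp (δ ^ 2 / (4 * t)) *
            qS11 t (Real.cos δ)
          - 1 - (25 - 20 * (Real.sin δ - δ * Real.cos δ) / (δ ^ 2 * Real.sin δ)) * t|
        ≤ C * t ^ 2 := by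
  obtain ⟨C, hC, h⟩ := qS11_small_time_cos_general (N := 5) (NeZero.ne 5) (sub_lt_self π hε.1)
  refine ⟨C, hC, 1, one_pos, fun t ht δ hδ => ?_⟩
  convert h t (Set.Ioo_subset_Ioc_self ht) δ hδ using 6 <;>
    norm_num [qS11_eq_oddSphereHeatKernel]
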